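/- Let F_1, ..., F_l be families of real-valued functions on X and let G = { x ↦ max(h_1(x), ..., h_l(x)) : h_i ∈ F_i for each i }. Then for any sample S = (x_1, ..., x_m), the empirical Rademacher complexity satisfies R_S(G) ≤ Σ_{j=1}^l R_S(F_j). The same bound holds when max is replaced by min. -/

import Mathlib

open Finset

/-- Empirical Rademacher complexity of a family `F` of real-valued functions with
respect to the sample `S = (x_1, ..., x_m)`:
`R_S(F) = (1/m) E_σ [ sup_{f ∈ F} Σ_i σ_i f(x_i) ]`, the expectation over the
`2^m` equally likely sign vectors written as an average. -/
noncomputable def empRad {X : Type*} {m : ℕ} (S : Fin m → X) (F : Set (X → ℝ)) : ℝ :=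
  (∑ σ : Fin m → Bool,
      sSup ((fun f => ∑ i, (if σ i then (1 : ℝ) else -1) * f (S i)) '' F)) / (2 ^ m * m)

/-!
Replacing a supremum over `A` for each sign vector `σ` by an arbitrary choice of a point of `A`
for each `σ` turns the complexity bound into a finite inequality. In this form Talagrand's
contraction principle is an exchange argument: pair the sign vectors that differ only at `i`; the
1-Lipschitz map applied at `i` can be removed at the cost of possibly swapping the two points
chosen for each pair. The bound for binary maxima follows from
`a ⊔ b = (a + b + |b - a|) / 2`, the bound for `l` classes by induction, and minima are negated
maxima of negations.
-/

open scoped Pointwise SetFamily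

section OrderedGroups

theorem sum_csSup_le {ι α : Type*} [AddCommGroup α] [ConditionallyCompleteLattice α]
    [IsOrderedAddMonoid α] (s : Finset ι) {A : ι → Set α} {w : α}
    (hne : ∀ i ∈ s, (A i).Nonempty)
    (h : ∀ f : ι → α, (∀ i ∈ s, f i ∈ A i) → ∑ i ∈ s, f i ≤ w) :
    ∑ i ∈ s, sSup (A i) ≤ w := by
  classical
  induction s using Finset.cons_induction generalizing w with
  | empty => simpa using h
  | cons a s ha ih =>
    rw [forall_mem_cons] at hne
    rw [sum_cons, ← le_sub_iff_add_le]
    refine csSup_le hne.1 fun x hx ↦ le_sub_comm.1 <| ih hne.2 fun f hf ↦ ?_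
    have hupdate : ∀ i ∈ s, Function.update f a x i = f i := fun i hi ↦
      Function.update_of_ne (ne_of_mem_of_not_mem hi ha) _ _
    have hsum := h (Function.update f a x) <| (forall_mem_cons ha _).2
      ⟨by simpa using hx, fun i hi ↦ by simpa only [hupdate i hi] using hf i hi⟩
    rw [sum_cons, Function.update_self, sum_congr rfl hupdate] at hsum
    exact le_sub_iff_add_le'.2 hsum

theorem neg_inf'_eq_sup'_neg {κ α : Type*} [Lattice α] [AddGroup α] [AddLeftMono α]
    [AddRightMono α] {s : Finset κ} (hs : s.Nonempty) (f : κ → α) :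
    -s.inf' hs f = s.sup' hs (-f) :=
  apply_inf'_eq_inf'_comp hs (fun x ↦ OrderDual.toDual (-x)) neg_inf

end OrderedGroups

section Involutions

variable {Ω α : Type*} [LinearOrder α] {τ : Ω → Ω}

theorem sum_le_sum_of_involutive [Fintype Ω] [AddCommMonoid α] [IsOrderedCancelAddMonoid α]
    (hτ : τ.Involutive) {f g : Ω → α} (h : ∀ ω, f ω + f (τ ω) ≤ g ω + g (τ ω)) :
    ∑ ω, f ω ≤ ∑ ω, g ω := by
  have hsum := sum_le_sum fun ω (_ : ω ∈ univ) ↦ h ω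
  have hf : ∑ ω, f (τ ω) = ∑ ω, f ω := Equiv.sum_comp (hτ.toPerm τ) f
  have hg : ∑ ω, g (τ ω) = ∑ ω, g ω := Equiv.sum_comp (hτ.toPerm τ) g
  rw [sum_add_distrib, sum_add_distrib, hf, hg, ← two_nsmul, ← two_nsmul] at hsum
  exact (nsmul_le_nsmul_iff_right two_ne_zero).1 hsum

theorem exists_exchange_of_involutive {β : Type*} [AddCommMagma α] (hτ : τ.Involutive)
    (L : Ω → β → α) (a : Ω → β) :
    ∃ b : Ω → β, (∀ ω, b ω = a ω ∨ b ω = a (τ ω)) ∧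
      ∀ ω, max (L ω (a ω) + L (τ ω) (a (τ ω))) (L ω (a (τ ω)) + L (τ ω) (a ω)) ≤
        L ω (b ω) + L (τ ω) (b (τ ω)) := by
  -- The condition for exchanging is the same at `ω` and at `τ ω`.
  refine ⟨fun ω ↦ if L ω (a (τ ω)) + L (τ ω) (a ω) ≤ L ω (a ω) + L (τ ω) (a (τ ω))
    then a ω else a (τ ω), fun ω ↦ ite_eq_or_eq .., fun ω ↦ ?_⟩
  simp only [hτ ω, add_comm (L (τ ω) _)]
  split_ifs with hle
  · exact max_le le_rfl hle
  · exact max_le (not_le.1 hle).le le_rfl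

end Involutions

section SignFlips

variable {ι : Type*} [DecidableEq ι]

/-- The sign vector obtained from `σ` by changing the sign at `i`. -/
def flipSign (i : ι) (σ : ι → Bool) : ι → Bool :=
  Function.update σ i !σ i

theorem flipSign_involutive (i : ι) : (flipSign i).Involutive := fun σ ↦ by
  simp [flipSign]

end SignFlips

section SignedSums

variable {ι : Type*} [Fintype ι]

/-- The correlation `∑ i, σ i * a i` of a vector `a` with a sign vector `σ`, as a linear function
of `a`; `true` encodes the sign `+1` and `false` the sign `-1`. -/
def signedSum (σ : ι → Bool) : (ι → ℝ) →ₗ[ℝ] ℝ :=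
  ∑ i, (if σ i then (1 : ℝ) else -1) • LinearMap.proj i

theorem signedSum_apply (σ : ι → Bool) (a : ι → ℝ) :
    signedSum σ a = ∑ i, (if σ i then (1 : ℝ) else -1) * a i := by
  simp only [signedSum, LinearMap.sum_apply, LinearMap.smul_apply, LinearMap.proj_apply,
    smul_eq_mul]

theorem signedSum_compl (σ : ι → Bool) (a : ι → ℝ) : signedSum σᶜ a = -signedSum σ a := by
  simp only [signedSum_apply, ← sum_neg_distrib]
  refine sum_congr rfl fun i _ ↦ ?_
  cases h : σ i <;> simp [h]

variable [DecidableEq ι]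

theorem signedSum_update (σ : ι → Bool) (a : ι → ℝ) (i : ι) (x : ℝ) :
    signedSum σ (Function.update a i x) =
      signedSum σ a + (if σ i then (1 : ℝ) else -1) * (x - a i) := by
  simp only [signedSum_apply, ← add_sum_erase univ _ (mem_univ i), Function.update_self]
  rw [sum_congr rfl fun j hj ↦ by rw [Function.update_of_ne (ne_of_mem_erase hj)]]
  ring

theorem signedSum_flipSign (σ : ι → Bool) (a : ι → ℝ) (i : ι) :
    signedSum (flipSign i σ) a = signedSum σ a - 2 * ((if σ i then (1 : ℝ) else -1) * a i) := by
  simp only [signedSum_apply, ← add_sum_erase univ _ (mem_univ i), flipSign,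
    Function.update_self]
  rw [sum_congr rfl fun j hj ↦ by rw [Function.update_of_ne (ne_of_mem_erase hj)]]
  cases σ i <;> simp <;> ring

theorem signedSum_update_add_flipSign_le_max {φ : ℝ → ℝ} (hφ : LipschitzWith 1 φ) (i : ι)
    (σ : ι → Bool) (a b : ι → ℝ) :
    signedSum σ (Function.update a i (φ (a i))) +
        signedSum (flipSign i σ) (Function.update b i (φ (b i))) ≤
      max (signedSum σ a + signedSum (flipSign i σ) b)
        (signedSum σ b + signedSum (flipSign i σ) a) := by
  have hφab : |φ (a i) - φ (b i)| ≤ |a i - b i| := by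
    simpa [Real.dist_eq] using hφ.dist_le_mul (a i) (b i)
  simp only [signedSum_flipSign, Function.update_self]
  simp only [signedSum_update]
  set ε : ℝ := if σ i then 1 else -1 with hε
  have hε_abs : |ε| = 1 := by rw [hε]; split_ifs <;> simp
  have hle : ε * (φ (a i) - φ (b i)) ≤ |ε * (a i - b i)| := calc
    ε * (φ (a i) - φ (b i)) ≤ |ε * (φ (a i) - φ (b i))| := le_abs_self _
    _ = |φ (a i) - φ (b i)| := by rw [abs_mul, hε_abs, one_mul]
    _ ≤ |a i - b i| := hφab
    _ = |ε * (a i - b i)| := by rw [abs_mul, hε_abs, one_mul]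
  rcases le_abs.1 hle with hkeep | hswap
  · exact le_max_of_le_left (by linarith)
  · exact le_max_of_le_right (by linarith)

end SignedSums

/-- Every choice of a point of `A` for each sign vector has total correlation at most `w`. For
nonempty `A` this says that `w` bounds the unnormalized Rademacher complexity of `A`, including
that its suprema are finite. -/
def IsRademacherBound {ι : Type*} [Fintype ι] [DecidableEq ι] (A : Set (ι → ℝ)) (w : ℝ) : Prop :=
  ∀ f : (ι → Bool) → ι → ℝ, (∀ σ, f σ ∈ A) → ∑ σ, signedSum σ (f σ) ≤ w

namespace IsRademacherBound

variable {ι : Type*} [Fintype ι] [DecidableEq ι] {A B : Set (ι → ℝ)} {w z : ℝ}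

theorem mono (hB : IsRademacherBound B w) (hAB : A ⊆ B) : IsRademacherBound A w :=
  fun f hf ↦ hB f fun σ ↦ hAB (hf σ)

theorem add (hA : IsRademacherBound A w) (hB : IsRademacherBound B z) :
    IsRademacherBound (A + B) (w + z) := by
  intro f hf
  choose a ha b hb hab using fun σ ↦ Set.mem_add.1 (hf σ)
  simp only [← hab, map_add, sum_add_distrib]
  exact add_le_add (hA a ha) (hB b hb)

theorem neg (hA : IsRademacherBound A w) : IsRademacherBound (-A) w := by
  intro f hf
  calc ∑ σ, signedSum σ (f σ)
      = ∑ σ : ι → Bool, signedSum σᶜ (f σᶜ) :=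
        (Equiv.sum_comp (compl_involutive.toPerm compl) fun σ ↦ signedSum σ (f σ)).symm
    _ = ∑ σ, signedSum σ (-f σᶜ) := by simp only [signedSum_compl, map_neg]
    _ ≤ w := hA _ fun σ ↦ hf σᶜ

theorem sub (hA : IsRademacherBound A w) (hB : IsRademacherBound B z) :
    IsRademacherBound (A - B) (w + z) := by
  simpa only [sub_eq_add_neg] using hA.add hB.neg

theorem smul {c : ℝ} (hc : 0 ≤ c) (hA : IsRademacherBound A w) :
    IsRademacherBound (c • A) (c * w) := by
  intro f hf
  choose a ha hca using fun σ ↦ Set.mem_smul_set.1 (hf σ)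
  simp only [← hca, map_smul, smul_eq_mul, ← mul_sum]
  exact mul_le_mul_of_nonneg_left (hA a ha) hc

theorem image_update {φ : ℝ → ℝ} (hφ : LipschitzWith 1 φ) (i : ι) (hA : IsRademacherBound A w) :
    IsRademacherBound ((fun a ↦ Function.update a i (φ (a i))) '' A) w := by
  intro f hf
  choose a ha hfa using hf
  obtain ⟨b, hb, hexchange⟩ :=
    exists_exchange_of_involutive (flipSign_involutive i) (fun σ ↦ signedSum σ) a
  have hbA : ∀ σ, b σ ∈ A := fun σ ↦ by
    rcases hb σ with h | h <;> rw [h] <;> exact ha _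
  calc ∑ σ, signedSum σ (f σ)
      = ∑ σ, signedSum σ (Function.update (a σ) i (φ (a σ i))) := by simp only [← hfa]
    _ ≤ ∑ σ, signedSum σ (b σ) := sum_le_sum_of_involutive (flipSign_involutive i) fun σ ↦
        (signedSum_update_add_flipSign_le_max hφ i σ _ _).trans (hexchange σ)
    _ ≤ w := hA b hbA

theorem image_piecewise_map {φ : ι → ℝ → ℝ} (hφ : ∀ i, LipschitzWith 1 (φ i))
    (hA : IsRademacherBound A w) (s : Finset ι) :
    IsRademacherBound ((fun a ↦ s.piecewise (Pi.map φ a) a) '' A) w := by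
  induction s using Finset.induction_on with
  | empty => simpa using hA
  | insert i s hi ih =>
    convert ih.image_update (hφ i) i using 1
    rw [Set.image_image]
    refine Set.image_congr fun a _ ↦ ?_
    rw [piecewise_insert, piecewise_eq_of_notMem _ _ _ hi, Pi.map_apply]

theorem image_map {φ : ι → ℝ → ℝ} (hφ : ∀ i, LipschitzWith 1 (φ i))
    (hA : IsRademacherBound A w) : IsRademacherBound (Pi.map φ '' A) w := by
  simpa using hA.image_piecewise_map hφ univ

theorem image_abs (hA : IsRademacherBound A w) : IsRademacherBound (abs '' A) w :=
  hA.image_map fun _ ↦ lipschitzWith_one_norm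

theorem sups (hA : IsRademacherBound A w) (hB : IsRademacherBound B z) :
    IsRademacherBound (A ⊻ B) (w + z) := by
  have hhalf : IsRademacherBound ((2⁻¹ : ℝ) • (A + B + abs '' (B - A)))
      (2⁻¹ * (w + z + (z + w))) :=
    ((hA.add hB).add (hB.sub hA).image_abs).smul (by positivity)
  rw [show (2⁻¹ * (w + z + (z + w)) : ℝ) = w + z by ring] at hhalf
  refine hhalf.mono (Set.sups_subset_iff.2 fun a ha b hb ↦ ?_)
  rw [sup_eq_half_smul_add_add_abs_sub' ℝ]
  exact Set.smul_mem_smul_set <| Set.add_mem_add (Set.add_mem_add ha hb)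
    (Set.mem_image_of_mem _ (Set.sub_mem_sub hb ha))

variable {κ : Type*} {C : κ → Set (ι → ℝ)} {v : κ → ℝ} {s : Finset κ}

theorem image_sup' (hs : s.Nonempty) (hC : ∀ j ∈ s, IsRademacherBound (C j) (v j)) :
    IsRademacherBound (s.sup' hs '' (s : Set κ).pi C) (∑ j ∈ s, v j) := by
  induction hs using Finset.Nonempty.cons_induction with
  | singleton j =>
    rw [sum_singleton]
    refine (hC j (mem_singleton_self j)).mono (Set.image_subset_iff.2 fun h hh ↦ ?_)
    simpa using hh
  | cons j s hj hs ih =>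
    rw [forall_mem_cons] at hC
    rw [sum_cons]
    refine (hC.1.sups (ih hC.2)).mono (Set.image_subset_iff.2 fun h hh ↦ ?_)
    rw [Set.mem_preimage, sup'_cons hs]
    exact Set.sup_mem_sups (hh j (mem_cons_self j s))
      (Set.mem_image_of_mem _ fun k hk ↦ hh k (mem_cons_of_mem hk))

theorem image_inf' (hs : s.Nonempty) (hC : ∀ j ∈ s, IsRademacherBound (C j) (v j)) :
    IsRademacherBound (s.inf' hs '' (s : Set κ).pi C) (∑ j ∈ s, v j) := by
  refine (image_sup' hs fun j hj ↦ (hC j hj).neg).neg.mono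
    (Set.image_subset_iff.2 fun h hh ↦ ?_)
  rw [Set.mem_preimage, Set.mem_neg, neg_inf'_eq_sup'_neg]
  exact Set.mem_image_of_mem _ fun j hj ↦ Set.neg_mem_neg.2 (hh j hj)

end IsRademacherBound

section RademacherWidth

variable {ι : Type*} [Fintype ι] [DecidableEq ι] {A : Set (ι → ℝ)}

/-- The unnormalized Rademacher complexity of a set of vectors: the sum over all sign vectors of
the supremum of their correlations with the points of `A`. A supremum that is
infinite or over the empty set counts as `0`. -/
noncomputable def rademacherWidth (A : Set (ι → ℝ)) : ℝ :=
  ∑ σ : ι → Bool, sSup (signedSum σ '' A)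

theorem isRademacherBound_rademacherWidth (hA : ∀ σ, BddAbove (signedSum σ '' A)) :
    IsRademacherBound A (rademacherWidth A) :=
  fun _ hf ↦ sum_le_sum fun σ _ ↦ le_csSup (hA σ) (Set.mem_image_of_mem _ (hf σ))

theorem IsRademacherBound.rademacherWidth_le {w : ℝ} (hA : IsRademacherBound A w)
    (hne : A.Nonempty) : rademacherWidth A ≤ w := by
  refine sum_csSup_le univ (fun _ _ ↦ hne.image _) fun f hf ↦ ?_
  choose a ha hfa using fun σ ↦ hf σ (mem_univ σ)
  simpa only [hfa] using hA a ha

end RademacherWidth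

section EmpRad

variable {X : Type*} {m : ℕ} {S : Fin m → X}

theorem signedSum_image_sample (σ : Fin m → Bool) (F : Set (X → ℝ)) :
    signedSum σ '' ((· ∘ S) '' F) =
      (fun f ↦ ∑ i, (if σ i then (1 : ℝ) else -1) * f (S i)) '' F := by
  simp only [Set.image_image, signedSum_apply, Function.comp_apply]

theorem empRad_eq_rademacherWidth_div (F : Set (X → ℝ)) :
    empRad S F = rademacherWidth ((· ∘ S) '' F) / (2 ^ m * m) := by
  simp only [empRad, rademacherWidth, signedSum_image_sample]

theorem empRad_le_sum_empRad {κ : Type*} [Fintype κ] {F : κ → Set (X → ℝ)} {G : Set (X → ℝ)}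
    (hne : G.Nonempty)
    (hG : IsRademacherBound ((· ∘ S) '' G) (∑ j, rademacherWidth ((· ∘ S) '' F j))) :
    empRad S G ≤ ∑ j, empRad S (F j) := by
  simp only [empRad_eq_rademacherWidth_div, ← sum_div]
  exact div_le_div_of_nonneg_right (hG.rademacherWidth_le (hne.image _)) (by positivity)

end EmpRad

/-- Lemma 9.1 of Mohri et al.: the empirical Rademacher complexity of the class of
pointwise maxima (and of pointwise minima) of `l` hypothesis classes is at most the
sum of the empirical Rademacher complexities of the classes. -/
theorem rad_max_min {X : Type*} {m l : ℕ} (hl : 0 < l) (S : Fin m → X)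
    (F : Fin l → Set (X → ℝ))
    (hne : ∀ j, (F j).Nonempty)
    (hbdd : ∀ j (σ : Fin m → Bool),
      BddAbove ((fun f => ∑ i, (if σ i then (1 : ℝ) else -1) * f (S i)) '' F j))
    (G Gmin : Set (X → ℝ))
    (hG : G = {g | ∃ h : Fin l → (X → ℝ), (∀ j, h j ∈ F j) ∧
        g = fun x => univ.sup' ⟨⟨0, hl⟩, mem_univ _⟩ fun j => h j x})
    (hGmin : Gmin = {g | ∃ h : Fin l → (X → ℝ), (∀ j, h j ∈ F j) ∧
        g = fun x => univ.inf' ⟨⟨0, hl⟩, mem_univ _⟩ fun j => h j x})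
    (hbddG : ∀ σ : Fin m → Bool,
      BddAbove ((fun f => ∑ i, (if σ i then (1 : ℝ) else -1) * f (S i)) '' G))
    (hbddGmin : ∀ σ : Fin m → Bool,
      BddAbove ((fun f => ∑ i, (if σ i then (1 : ℝ) else -1) * f (S i)) '' Gmin)) :
    empRad S G ≤ ∑ j, empRad S (F j) ∧ empRad S Gmin ≤ ∑ j, empRad S (F j) := by
  have hF : ∀ j ∈ univ, IsRademacherBound ((· ∘ S) '' F j) (rademacherWidth ((· ∘ S) '' F j)) :=
    fun j _ ↦ isRademacherBound_rademacherWidth fun σ ↦ by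
      simpa only [signedSum_image_sample] using hbdd j σ
  choose f hf using hne
  subst hG hGmin
  constructor
  · refine empRad_le_sum_empRad ⟨_, f, hf, rfl⟩ <|
      (IsRademacherBound.image_sup' ⟨⟨0, hl⟩, mem_univ _⟩ hF).mono ?_
    rintro _ ⟨_, ⟨h, hh, rfl⟩, rfl⟩
    exact ⟨fun j ↦ h j ∘ S, fun j _ ↦ ⟨h j, hh j, rfl⟩, funext (Finset.sup'_apply _ _)⟩
  · refine empRad_le_sum_empRad ⟨_, f, hf, rfl⟩ <|
      (IsRademacherBound.image_inf' ⟨⟨0, hl⟩, mem_univ _⟩ hF).mono ?_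
    rintro _ ⟨_, ⟨h, hh, rfl⟩, rfl⟩
    exact ⟨fun j ↦ h j ∘ S, fun j _ ↦ ⟨h j, hh j, rfl⟩, funext (Finset.inf'_apply _ _)⟩
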